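/- Let c be a nonnegative integer and let n ≥ 1 be an integer with c ≥ n − 1. Then the underlying undirected graph of the finite constant Jaco graph J_n(f) with incidence function f(x) = c is the complete graph K_n. -/

import Mathlib

/-- In-degree of vertex `v_j` in the (root) Jaco graph with incidence function `f`:
`d⁻(v_j) = |{ i : 1 ≤ i < j, i + f i − d⁻(v_i) ≥ j }|`. -/
noncomputable def jacoIn (f : ℕ → ℕ) (j : ℕ) : ℕ :=
  Nat.strongRecOn j (fun j ih =>
    (((Finset.Ico 1 j).attach).filter (fun i : {x // x ∈ Finset.Ico 1 j} =>
      j ≤ i.1 + f i.1 - ih i.1 (Finset.mem_Ico.mp i.2).2)).card)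

/-- The arc `(v_i, v_j)` is present in the Jaco graph iff `1 ≤ i < j` and
`i + f i − d⁻(v_i) ≥ j`. -/
def jacoArc (f : ℕ → ℕ) (i j : ℕ) : Prop :=
  1 ≤ i ∧ i < j ∧ j ≤ i + f i - jacoIn f i

noncomputable instance (f : ℕ → ℕ) (i j : ℕ) : Decidable (jacoArc f i j) := by
  unfold jacoArc; infer_instance

/-- The underlying undirected simple graph `J*_n(f)` of the finite Jaco graph `J_n(f)`,
on vertex set `{v_1, …, v_n}` (vertex `x : Fin n` represents `v_{x+1}`). -/
def jacoGraph (f : ℕ → ℕ) (n : ℕ) : SimpleGraph (Fin n) :=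
  SimpleGraph.fromRel (fun x y => jacoArc f (x.1 + 1) (y.1 + 1))

noncomputable instance (f : ℕ → ℕ) (n : ℕ) : DecidableRel (jacoGraph f n).Adj := fun x y =>
  decidable_of_iff
    (x ≠ y ∧ (jacoArc f (x.1 + 1) (y.1 + 1) ∨ jacoArc f (y.1 + 1) (x.1 + 1)))
    (by unfold jacoGraph; exact (SimpleGraph.fromRel_adj (fun a b : Fin n => jacoArc f (a.1 + 1) (b.1 + 1)) x y).symm)

theorem jacoIn_eq_card_filter (f : ℕ → ℕ) (j : ℕ) :
    jacoIn f j = ((Finset.Ico 1 j).filter fun i => jacoArc f i j).card := by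
  have recursion : jacoIn f j =
      ((Finset.Ico 1 j).attach.filter fun i => j ≤ i.1 + f i.1 - jacoIn f i.1).card :=
    Nat.strongRecOn_eq _ j
  rw [recursion, Finset.filter_attach (fun i => j ≤ i + f i - jacoIn f i), Finset.card_map,
    Finset.card_attach]
  refine congrArg Finset.card (Finset.filter_congr fun i hi => ?_)
  obtain ⟨one_le, lt⟩ := Finset.mem_Ico.mp hi
  exact ⟨fun reach => ⟨one_le, lt, reach⟩, fun arc => arc.2.2⟩

theorem jacoIn_le_pred (f : ℕ → ℕ) (j : ℕ) : jacoIn f j ≤ j - 1 :=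
  calc
    jacoIn f j = ((Finset.Ico 1 j).filter fun i => jacoArc f i j).card :=
      jacoIn_eq_card_filter f j
    _ ≤ (Finset.Ico 1 j).card := Finset.card_filter_le _ _
    _ = j - 1 := Nat.card_Ico 1 j

/- Since `d⁻(v_i) ≤ i - 1`, the arcs out of `v_i` reach at least as far as the vertex with index
`i + f i - (i - 1) = f i + 1`. -/
theorem jacoArc_of_le_succ {f : ℕ → ℕ} {i j : ℕ} (hi : 1 ≤ i) (hij : i < j)
    (hj : j ≤ f i + 1) : jacoArc f i j := by
  have indegree_le := jacoIn_le_pred f i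
  exact ⟨hi, hij, by omega⟩

theorem jacoGraph_adj_of_jacoArc {f : ℕ → ℕ} {n : ℕ} {x y : Fin n}
    (h : jacoArc f (x.1 + 1) (y.1 + 1)) : (jacoGraph f n).Adj x y :=
  (SimpleGraph.fromRel_adj _ x y).mpr
    ⟨fun hxy => (Nat.lt_of_succ_lt_succ h.2.1).ne (congrArg Fin.val hxy), Or.inl h⟩

theorem constant_jaco_graph_complete_general (f : ℕ → ℕ) (n : ℕ)
    (hf : ∀ i, 1 ≤ i → i < n → n ≤ f i + 1) : jacoGraph f n = ⊤ := by
  have adj_of_lt {x y : Fin n} (hxy : x < y) : (jacoGraph f n).Adj x y := by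
    have source_lt : x.1 + 1 < y.1 + 1 := Nat.succ_lt_succ hxy
    have target_le : y.1 + 1 ≤ n := y.2
    have reach : n ≤ f (x.1 + 1) + 1 := hf _ x.1.succ_pos (source_lt.trans_le target_le)
    exact jacoGraph_adj_of_jacoArc
      (jacoArc_of_le_succ x.1.succ_pos source_lt (target_le.trans reach))
  refine SimpleGraph.eq_top_iff_forall_ne_adj.mpr fun x y hne => ?_
  rcases hne.lt_or_gt with hxy | hyx
  · exact adj_of_lt hxy
  · exact (adj_of_lt hyx).symm

/-- If `c ≥ n − 1` (and `n ≥ 1`), the underlying graph of the finite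
constant Jaco graph `J_n(f)` with `f(x) = c` is the complete graph `K_n`. -/
theorem constant_jaco_graph_complete (c n : ℕ) (hn : 1 ≤ n) (hc : n - 1 ≤ c) :
    jacoGraph (fun _ => c) n = (⊤ : SimpleGraph (Fin n)) := by
  exact constant_jaco_graph_complete_general _ n fun _ _ _ => Nat.sub_le_iff_le_add.mp hc
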